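/- arXiv:2509.02205 — 2 statements merged into one kernel-verified Lean document; each statement's English description precedes it below -/
import Mathlib

section
/- Let X and Y be Polish spaces, μ ∈ P(X), c : X×Y → [0,∞] lower semicontinuous, L : Y → [0,∞] lower semicontinuous with compact sublevel sets, and H : Y×Y → [0,∞] lower semicontinuous and symmetric. If inf_{γ ∈ P_μ(X×Y)} J(γ) < ∞, then the infimum is attained: there exists γ̄ ∈ P_μ(X×Y) with J(γ̄) = inf_{γ ∈ P_μ(X×Y)} J(γ). -/
open MeasureTheory Filter Topology

/-!
The direct method. On `P_μ(X × Y)` the functional `J` is lower semicontinuous for the narrow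
topology: by the layer cake formula, Fatou's lemma and the portmanteau inequality for open sets,
integration against a lower semicontinuous `[0, ∞]`-valued function is, and `γ ↦ ν` and
`ν ↦ ν ⊗ ν` are narrowly continuous. A bound on `J` bounds `∫ L dν`, so by Markov's inequality the
second marginals of a sublevel set of `J` are tight; the first marginal being the fixed tight
measure `μ`, Prokhorov's theorem makes every sublevel set `{J ≤ b}`, `b < ∞`, compact.
-/

section SublevelSets

variable {α : Type*} [TopologicalSpace α]

lemma exists_isMinOn_of_isCompact_sublevel {β : Type*} [LinearOrder β] [OrderTop β] {f : α → β}
    {s : Set α} (hs : s.Nonempty) (hf : LowerSemicontinuousOn f s)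
    (hcomp : ∀ b, b ≠ ⊤ → IsCompact (s ∩ f ⁻¹' Set.Iic b)) :
    ∃ a ∈ s, IsMinOn f s a := by
  by_cases htop : ∀ x ∈ s, f x = ⊤
  · obtain ⟨a, ha⟩ := hs
    exact ⟨a, ha, fun x hx ↦ le_top.trans_eq (htop x hx).symm⟩
  · push Not at htop
    obtain ⟨x₀, hx₀, hfx₀⟩ := htop
    have hne : (s ∩ f ⁻¹' Set.Iic (f x₀)).Nonempty := ⟨x₀, hx₀, le_refl (f x₀)⟩
    obtain ⟨a, ⟨has, hax₀⟩, hmin⟩ := LowerSemicontinuousOn.exists_isMinOn hne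
      (hcomp (f x₀) hfx₀) (hf.mono Set.inter_subset_left)
    refine ⟨a, has, fun x hx ↦ ?_⟩
    obtain hle | hlt := le_or_gt (f x) (f x₀)
    · exact hmin ⟨hx, hle⟩
    · exact hax₀.trans hlt.le

lemma lowerSemicontinuous_of_isCompact_sublevel [T2Space α] {f : α → ENNReal}
    (hcomp : ∀ κ : NNReal, 0 < κ → IsCompact {x | f x ≤ κ}) : LowerSemicontinuous f := by
  intro x b hb
  obtain ⟨κ, hbκ, hκx⟩ := ENNReal.lt_iff_exists_nnreal_btwn.1 hb
  have hκ : 0 < κ := ENNReal.coe_pos.1 (pos_of_gt hbκ)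
  filter_upwards [(hcomp κ hκ).isClosed.isOpen_compl.mem_nhds (not_le.2 hκx)] with z hz
  exact hbκ.trans (not_le.1 hz)

end SublevelSets

section LayerCake

lemma volume_setOf_ofReal_lt_inter_Ioi (a : ENNReal) :
    volume ({t : ℝ | ENNReal.ofReal t < a} ∩ Set.Ioi 0) = a := by
  induction a with
  | top => simp
  | coe a =>
    have hIoo : {t : ℝ | ENNReal.ofReal t < a} ∩ Set.Ioi 0 = Set.Ioo 0 (a : ℝ) := by
      ext t
      rw [Set.mem_inter_iff, and_comm]
      refine and_congr_right fun ht ↦ ?_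
      rw [Set.mem_ofPred_eq, ← ENNReal.ofReal_coe_nnreal,
        ENNReal.ofReal_lt_ofReal_iff_of_nonneg (le_of_lt ht)]
    rw [hIoo, Real.volume_Ioo, sub_zero, ENNReal.ofReal_coe_nnreal]

/-- Unlike in `MeasureTheory.lintegral_eq_lintegral_meas_lt`, the value `∞` may be taken on a set of
positive measure. -/
lemma lintegral_eq_lintegral_meas_ofReal_lt {Ω : Type*} [MeasurableSpace Ω] (ν : Measure Ω)
    [SFinite ν] {f : Ω → ENNReal} (hf : Measurable f) :
    ∫⁻ ω, f ω ∂ν = ∫⁻ t in Set.Ioi (0 : ℝ), ν {ω | ENNReal.ofReal t < f ω} := by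
  have hvol (ω : Ω) : f ω = volume.restrict (Set.Ioi (0 : ℝ)) {t | ENNReal.ofReal t < f ω} := by
    rw [Measure.restrict_apply (measurableSet_lt (by fun_prop) measurable_const),
      volume_setOf_ofReal_lt_inter_Ioi]
  have hmeas : MeasurableSet {p : Ω × ℝ | ENNReal.ofReal p.2 < f p.1} :=
    measurableSet_lt (by fun_prop) (by fun_prop)
  calc ∫⁻ ω, f ω ∂ν
      = ∫⁻ ω, volume.restrict (Set.Ioi (0 : ℝ)) {t | ENNReal.ofReal t < f ω} ∂ν :=
        lintegral_congr hvol
    _ = ν.prod (volume.restrict (Set.Ioi 0)) {p | ENNReal.ofReal p.2 < f p.1} :=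
        (Measure.prod_apply hmeas).symm
    _ = ∫⁻ t in Set.Ioi (0 : ℝ), ν {ω | ENNReal.ofReal t < f ω} := Measure.prod_apply_symm hmeas

end LayerCake

section NarrowTopology

variable {Ω : Type*} [TopologicalSpace Ω] [MeasurableSpace Ω]

lemma lintegral_le_liminf_lintegral_of_tendsto [OpensMeasurableSpace Ω] [HasOuterApproxClosed Ω]
    {f : Ω → ENNReal} (hf : LowerSemicontinuous f) {ι : Type*} {l : Filter ι}
    [l.IsCountablyGenerated] {P : ι → ProbabilityMeasure Ω} {Q : ProbabilityMeasure Ω}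
    (hPQ : Tendsto P l (𝓝 Q)) :
    ∫⁻ ω, f ω ∂(Q : Measure Ω) ≤ l.liminf fun i ↦ ∫⁻ ω, f ω ∂(P i : Measure Ω) := by
  simp only [lintegral_eq_lintegral_meas_ofReal_lt _ hf.measurable]
  have hmeas (i : ι) : Measurable fun t ↦ (P i : Measure Ω) {ω | ENNReal.ofReal t < f ω} :=
    Antitone.measurable fun _ _ hst ↦
      measure_mono fun _ hω ↦ (ENNReal.ofReal_le_ofReal hst).trans_lt hω
  calc ∫⁻ t in Set.Ioi (0 : ℝ), (Q : Measure Ω) {ω | ENNReal.ofReal t < f ω}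
      ≤ ∫⁻ t in Set.Ioi (0 : ℝ), l.liminf fun i ↦ (P i : Measure Ω) {ω | ENNReal.ofReal t < f ω} :=
        lintegral_mono fun t ↦ ProbabilityMeasure.le_liminf_measure_open_of_tendsto hPQ
          (hf.isOpen_preimage (ENNReal.ofReal t))
    _ ≤ l.liminf fun i ↦ ∫⁻ t in Set.Ioi (0 : ℝ), (P i : Measure Ω) {ω | ENNReal.ofReal t < f ω} :=
        lintegral_liminf_le hmeas

lemma lowerSemicontinuous_lintegral_probabilityMeasure [TopologicalSpace.PseudoMetrizableSpace Ω]
    [SecondCountableTopology Ω] [OpensMeasurableSpace Ω] {f : Ω → ENNReal}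
    (hf : LowerSemicontinuous f) :
    LowerSemicontinuous fun P : ProbabilityMeasure Ω ↦ ∫⁻ ω, f ω ∂(P : Measure Ω) :=
  lowerSemicontinuous_iff_le_liminf.2 fun _ ↦ lintegral_le_liminf_lintegral_of_tendsto hf tendsto_id

lemma isTightMeasureSet_of_lintegral_le {f : Ω → ENNReal} (hf : Measurable f)
    (hcomp : ∀ κ : NNReal, 0 < κ → IsCompact {ω | f ω ≤ κ}) {S : Set (Measure Ω)} {M : ENNReal}
    (hM : M ≠ ⊤) (hS : ∀ ν ∈ S, ∫⁻ ω, f ω ∂ν ≤ M) : IsTightMeasureSet S := by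
  rw [isTightMeasureSet_iff_exists_isCompact_measure_compl_le]
  intro ε hε
  obtain ⟨κ, hκ, hMκ⟩ : ∃ κ : NNReal, 0 < κ ∧ M / κ < ε := by
    obtain ⟨δ, hδ, hδM⟩ := ENNReal.exists_nnreal_pos_mul_lt hM hε.ne'
    exact ⟨δ⁻¹, inv_pos.2 hδ, by rwa [ENNReal.coe_inv hδ.ne', div_eq_mul_inv, inv_inv, mul_comm]⟩
  refine ⟨{ω | f ω ≤ κ}, hcomp κ hκ, fun ν hν ↦ ?_⟩
  calc ν {ω | f ω ≤ κ}ᶜ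
      ≤ ν {ω | κ ≤ f ω} := measure_mono fun ω hω ↦ (le_total (f ω) κ).resolve_left hω
    _ ≤ (∫⁻ ω, f ω ∂ν) / κ :=
        meas_ge_le_lintegral_div hf.aemeasurable (ENNReal.coe_ne_zero.2 hκ.ne') ENNReal.coe_ne_top
    _ ≤ M / κ := ENNReal.div_le_div_right (hS ν hν) _
    _ ≤ ε := hMκ.le

end NarrowTopology

section PotentialFunctional

open TopologicalSpace (MetrizableSpace PseudoMetrizableSpace)

variable {X Y : Type*} [MeasurableSpace X] [MeasurableSpace Y]

/-- The functional `J(γ) = ∫ c dγ + ∫ L dν + ∫∫ H dν⊗ν`, where `ν` is the second marginal of `γ`,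
defined on all measures `γ` on `X × Y`. -/
noncomputable def potentialFunctional (c : X × Y → ENNReal) (L : Y → ENNReal)
    (H : Y × Y → ENNReal) (γ : Measure (X × Y)) : ENNReal :=
  ∫⁻ p, c p ∂γ + ∫⁻ y, L y ∂(γ.map Prod.snd) +
    ∫⁻ q, H q ∂((γ.map Prod.snd).prod (γ.map Prod.snd))

/-- The set `P_μ(X × Y)` of probability measures on `X × Y` with first marginal `μ`, as a set in
the space of probability measures, which carries the narrow topology. -/
def plansWithFst (Y : Type*) [MeasurableSpace Y] (μ : Measure X) :
    Set (ProbabilityMeasure (X × Y)) :=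
  {γ | (γ : Measure (X × Y)).map Prod.fst = μ}

lemma plansWithFst_nonempty [Nonempty Y] (μ : Measure X) [IsProbabilityMeasure μ] :
    (plansWithFst Y μ).Nonempty :=
  let ⟨y⟩ := ‹Nonempty Y›
  ⟨⟨μ.prod (Measure.dirac y), inferInstance⟩, measurePreserving_fst.map_eq⟩

variable [TopologicalSpace X] [TopologicalSpace Y] [BorelSpace X]

lemma isClosed_plansWithFst [OpensMeasurableSpace Y] [SecondCountableTopologyEither X Y]
    [HasOuterApproxClosed X] (μ : Measure X) : IsClosed (plansWithFst Y μ) := by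
  have hfst : Continuous fun γ : ProbabilityMeasure (X × Y) ↦ γ.map measurable_fst.aemeasurable :=
    ProbabilityMeasure.continuous_map continuous_fst
  have hsub : {P : ProbabilityMeasure X | (P : Measure X) = μ}.Subsingleton :=
    fun P hP Q hQ ↦ Subtype.ext (hP.trans hQ.symm)
  exact hsub.isClosed.preimage hfst

variable [BorelSpace Y] [SecondCountableTopology X] [SecondCountableTopology Y]

lemma lowerSemicontinuous_potentialFunctional [PseudoMetrizableSpace X] [PseudoMetrizableSpace Y]
    {c : X × Y → ENNReal} (hc : LowerSemicontinuous c) {L : Y → ENNReal}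
    (hL : LowerSemicontinuous L) {H : Y × Y → ENNReal} (hH : LowerSemicontinuous H) :
    LowerSemicontinuous fun γ : ProbabilityMeasure (X × Y) ↦ potentialFunctional c L H γ := by
  let sndMarginal (γ : ProbabilityMeasure (X × Y)) : ProbabilityMeasure Y :=
    γ.map measurable_snd.aemeasurable
  have hsnd : Continuous sndMarginal := ProbabilityMeasure.continuous_map continuous_snd
  have hprod : Continuous fun γ ↦ (sndMarginal γ).prod (sndMarginal γ) :=
    ProbabilityMeasure.continuous_prod.comp (hsnd.prodMk hsnd)
  exact ((lowerSemicontinuous_lintegral_probabilityMeasure hc).add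
    ((lowerSemicontinuous_lintegral_probabilityMeasure hL).comp hsnd)).add
    ((lowerSemicontinuous_lintegral_probabilityMeasure hH).comp hprod)

lemma isCompact_plansWithFst_inter_sublevel [MetrizableSpace X] [MetrizableSpace Y]
    {μ : Measure X} (hμ : IsTightMeasureSet {μ}) {c : X × Y → ENNReal}
    (hc : LowerSemicontinuous c) {L : Y → ENNReal}
    (hLcomp : ∀ κ : NNReal, 0 < κ → IsCompact {y | L y ≤ κ}) {H : Y × Y → ENNReal}
    (hH : LowerSemicontinuous H) {b : ENNReal} (hb : b ≠ ⊤) :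
    IsCompact (plansWithFst Y μ ∩
      (fun γ : ProbabilityMeasure (X × Y) ↦ potentialFunctional c L H γ) ⁻¹' Set.Iic b) := by
  set S := plansWithFst Y μ ∩
    (fun γ : ProbabilityMeasure (X × Y) ↦ potentialFunctional c L H γ) ⁻¹' Set.Iic b
  have hL : LowerSemicontinuous L := lowerSemicontinuous_of_isCompact_sublevel hLcomp
  have hclosed : IsClosed S := (isClosed_plansWithFst μ).inter
    ((lowerSemicontinuous_potentialFunctional hc hL hH).isClosed_preimage b)
  have htight : IsTightMeasureSet {(γ : Measure (X × Y)) | γ ∈ S} := by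
    refine IsTightMeasureSet.prodMk (hμ.subset ?_)
      (isTightMeasureSet_of_lintegral_le hL.measurable hLcomp hb ?_)
    · rintro _ ⟨_, ⟨γ, hγ, rfl⟩, rfl⟩
      exact hγ.1
    · rintro _ ⟨_, ⟨γ, hγ, rfl⟩, rfl⟩
      exact (le_add_self.trans le_self_add).trans hγ.2
  exact hclosed.closure_eq ▸ isCompact_closure_of_isTightMeasureSet htight

theorem potential_functional_attains_min_general [MetrizableSpace X] [MetrizableSpace Y]
    [Nonempty Y] (μ : Measure X) [IsProbabilityMeasure μ] (hμ : IsTightMeasureSet {μ})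
    {c : X × Y → ENNReal} (hc : LowerSemicontinuous c)
    {L : Y → ENNReal} (hLcomp : ∀ κ : NNReal, 0 < κ → IsCompact {y | L y ≤ κ})
    {H : Y × Y → ENNReal} (hH : LowerSemicontinuous H) :
    ∃ γ' ∈ {γ : Measure (X × Y) | IsProbabilityMeasure γ ∧ γ.map Prod.fst = μ},
      potentialFunctional c L H γ' =
        ⨅ γ ∈ {γ : Measure (X × Y) | IsProbabilityMeasure γ ∧ γ.map Prod.fst = μ},
          potentialFunctional c L H γ := by
  have hL : LowerSemicontinuous L := lowerSemicontinuous_of_isCompact_sublevel hLcomp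
  obtain ⟨γ', hγ', hmin⟩ := exists_isMinOn_of_isCompact_sublevel (plansWithFst_nonempty μ)
    ((lowerSemicontinuous_potentialFunctional hc hL hH).lowerSemicontinuousOn _)
    fun _ hb ↦ isCompact_plansWithFst_inter_sublevel hμ hc hLcomp hH hb
  exact ⟨γ', ⟨inferInstance, hγ'⟩, le_antisymm
    (le_iInf₂ fun γ hγ ↦ isMinOn_iff.1 hmin ⟨γ, hγ.1⟩ hγ.2) (iInf₂_le _ ⟨inferInstance, hγ'⟩)⟩

end PotentialFunctional

/-- If the potential functional
`J(γ) = ∫ c dγ + ∫ L dν + ∫∫ H dν⊗ν` (with `ν` the second marginal of `γ`) has finite infimum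
over `P_μ(X×Y)`, then the infimum is attained. -/
theorem potential_functional_attains_min
    {X Y : Type*}
    [TopologicalSpace X] [PolishSpace X] [MeasurableSpace X] [BorelSpace X]
    [TopologicalSpace Y] [PolishSpace Y] [MeasurableSpace Y] [BorelSpace Y]
    (μ : Measure X) [IsProbabilityMeasure μ]
    (c : X × Y → ENNReal) (hc : LowerSemicontinuous c)
    (L : Y → ENNReal) (hL : LowerSemicontinuous L)
    (hLcomp : ∀ κ : NNReal, 0 < κ → IsCompact {y : Y | L y ≤ (κ : ENNReal)})
    (H : Y × Y → ENNReal) (hH : LowerSemicontinuous H)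
    (hHsymm : ∀ y y' : Y, H (y, y') = H (y', y))
    (J : Measure (X × Y) → ENNReal)
    (hJ : ∀ γ : Measure (X × Y), J γ =
      ∫⁻ p, c p ∂γ + ∫⁻ y, L y ∂(γ.map Prod.snd) +
        ∫⁻ q, H q ∂((γ.map Prod.snd).prod (γ.map Prod.snd)))
    (hfin : (⨅ γ ∈ {γ : Measure (X × Y) | IsProbabilityMeasure γ ∧ γ.map Prod.fst = μ}, J γ) < ⊤) :
    ∃ γ' ∈ {γ : Measure (X × Y) | IsProbabilityMeasure γ ∧ γ.map Prod.fst = μ},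
      J γ' = ⨅ γ ∈ {γ : Measure (X × Y) | IsProbabilityMeasure γ ∧ γ.map Prod.fst = μ}, J γ := by
  simp only [iInf_lt_iff] at hfin
  obtain ⟨γ, ⟨_, -⟩, -⟩ := hfin
  have : Nonempty Y := γ.nonempty_of_neZero.map Prod.snd
  obtain rfl : J = potentialFunctional c L H := funext hJ
  exact potential_functional_attains_min_general μ isTightMeasureSet_singleton hc hLcomp hH
end

section
/- Let X and Y be Polish spaces, μ ∈ P(X), c : X×Y → [0,∞] lower semicontinuous, L : Y → [0,∞] lower semicontinuous with compact sublevel sets, and H : Y×Y → [0,∞] lower semicontinuous and symmetric. Assume inf_{P_μ(X×Y)} J < ∞, and assume that for every n ∈ ℕ there exist a constant C_n ∈ (0,∞) and a measurable family (ν_n^y)_{y∈Y} ⊆ P(Y) (i.e. y ↦ ν_n^y(B) Borel for every Borel B ⊆ Y) such that: (1) ∫_{Y×Y} H dν_n^y⊗ν_n^{y'} ≤ C_n(1 + L(y) + L(y')) for all y,y' ∈ Y; (2) for every (x,y,ν) with Φ(x,y,ν) < ∞, ∫_Y Φ(x,z,ν) dν_n^y(z) → Φ(x,y,ν) as n → ∞.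 Then every minimizer of J over P_μ(X×Y) is a Cournot–Nash equilibrium. -/
open MeasureTheory Filter Topology

/-!
Let `γ` minimize the potential. Replace a piece `t • η ≤ γ` by `t • η'`, where `η'` has the same
first marginal as `η`. The potential changes by `t (∫ Φ dη' - ∫ Φ dη)`, with `Φ` evaluated at the
second marginal of `γ`, up to interaction energies of order `t²`; when these are finite, letting
`t → 0` gives `∫ Φ dη ≤ ∫ Φ dη'`. The best-response map `T(x) ∈ argmin Φ(x, ·)` is measurable, but
the deviation to `T` itself may have infinite interaction energy. The randomized deviation of `x`
to `ν_n^{T(x)}` has finite energy, so `Φ(x, y) ≤ ∫ Φ(x, ·) dν_n^{T(x)}` for `γ`-almost every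
`(x, y)`, and the right-hand side tends to `Φ(x, T(x)) = min Φ(x, ·)`.
-/

open ProbabilityTheory
open scoped ENNReal NNReal

section MeasurableSelection

variable {X Y : Type*} [MeasurableSpace X]

/-- A measurable multifunction with nonempty compact values, measurability meaning that every
closed set is hit on a measurable set of arguments. -/
structure IsMeasurableCompactValued [TopologicalSpace Y] (K : X → Set Y) : Prop where
  isCompact (x : X) : IsCompact (K x)
  nonempty (x : X) : (K x).Nonempty
  measurableSet_hit {F : Set Y} (hF : IsClosed F) : MeasurableSet {x | (K x ∩ F).Nonempty}

namespace IsMeasurableCompactValued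

theorem exists_refinement_closedBall [PseudoMetricSpace Y] [TopologicalSpace.SeparableSpace Y]
    [Nonempty Y] [MeasurableSpace Y] {K : X → Set Y} (hK : IsMeasurableCompactValued K) {ε : ℝ}
    (hε : 0 < ε) :
    ∃ K' : X → Set Y, IsMeasurableCompactValued K' ∧ (∀ x, K' x ⊆ K x) ∧
      ∃ e : X → Y, Measurable e ∧ ∀ x, K' x ⊆ Metric.closedBall (e x) ε := by
  classical
  let d := TopologicalSpace.denseSeq Y
  have exists_hit (x : X) : ∃ j, (K x ∩ Metric.closedBall (d j) ε).Nonempty := by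
    obtain ⟨y, hy⟩ := hK.nonempty x
    obtain ⟨j, hj⟩ := (TopologicalSpace.denseRange_denseSeq Y).exists_dist_lt y hε
    exact ⟨j, y, hy, hj.le⟩
  let j (x : X) : ℕ := Nat.find (exists_hit x)
  have hj : Measurable j :=
    measurable_find exists_hit fun k => hK.measurableSet_hit Metric.isClosed_closedBall
  refine ⟨fun x => K x ∩ Metric.closedBall (d (j x)) ε,
    { isCompact := fun x => (hK.isCompact x).inter_right Metric.isClosed_closedBall
      nonempty := fun x => Nat.find_spec (exists_hit x)
      measurableSet_hit := fun {F} hF => ?_ },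
    fun x => Set.inter_subset_left, fun x => d (j x), measurable_from_nat.comp hj,
    fun x => Set.inter_subset_right⟩
  have hit_eq_iUnion : {x | (K x ∩ Metric.closedBall (d (j x)) ε ∩ F).Nonempty} =
      ⋃ i, j ⁻¹' {i} ∩ {x | (K x ∩ (Metric.closedBall (d i) ε ∩ F)).Nonempty} := by
    ext x
    simp [Set.inter_assoc]
  rw [hit_eq_iUnion]
  exact .iUnion fun i => (hj (measurableSet_singleton i)).inter
    (hK.measurableSet_hit (Metric.isClosed_closedBall.inter hF))

/-- A form of the Kuratowski–Ryll-Nardzewski theorem. -/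
theorem exists_measurable_selection [TopologicalSpace Y] [TopologicalSpace.MetrizableSpace Y]
    [TopologicalSpace.SeparableSpace Y] [Nonempty Y] [MeasurableSpace Y] [BorelSpace Y]
    {K : X → Set Y} (hK : IsMeasurableCompactValued K) :
    ∃ T : X → Y, Measurable T ∧ ∀ x, T x ∈ K x := by
  let _ := TopologicalSpace.metrizableSpaceMetric Y
  have refine_once (n : ℕ) (K : {K : X → Set Y // IsMeasurableCompactValued K}) :=
    K.2.exists_refinement_closedBall (Nat.one_div_pos_of_nat (α := ℝ) (n := n))
  choose refined hrefined refined_subset e he refined_subset_closedBall using refine_once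
  let S (n : ℕ) : {K : X → Set Y // IsMeasurableCompactValued K} :=
    Nat.rec ⟨K, hK⟩ (fun n K => ⟨refined n K, hrefined n K⟩) n
  have iInter_nonempty (x : X) : (⋂ n, (S n).1 x).Nonempty :=
    IsCompact.nonempty_iInter_of_sequence_nonempty_isCompact_isClosed _
      (fun n => refined_subset n (S n) x) (fun n => (S n).2.nonempty x) ((S 0).2.isCompact x)
      (fun n => ((S n).2.isCompact x).isClosed)
  choose T hT using iInter_nonempty
  rw [forall_congr' fun x => Set.mem_iInter] at hT
  refine ⟨T, measurable_of_tendsto_metrizable (fun n => he n (S n)) ?_, fun x => hT x 0⟩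
  refine tendsto_pi_nhds.2 fun x => tendsto_iff_dist_tendsto_zero.2 ?_
  refine squeeze_zero (fun _ => dist_nonneg) (fun n => ?_)
    (tendsto_one_div_add_atTop_nhds_zero_nat (𝕜 := ℝ))
  rw [dist_comm]
  exact refined_subset_closedBall n (S n) x (hT x (n + 1))

end IsMeasurableCompactValued

end MeasurableSelection

section Argmin

variable {X Y β : Type*} [TopologicalSpace Y] [CompleteLinearOrder β] {G : X × Y → β}

/-- Compactness of the sublevel sets of the functions `G (x, ·)`, uniformly in `x`: at each level
below `⊤`, one compact set contains all of them. -/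
def UniformlyLevelCompact (G : X × Y → β) : Prop :=
  ∀ a < ⊤, ∃ K : Set Y, IsCompact K ∧ ∀ x y, G (x, y) ≤ a → y ∈ K

theorem UniformlyLevelCompact.comp {X' : Type*} (hG : UniformlyLevelCompact G) (f : X' → X) :
    UniformlyLevelCompact fun p : X' × Y => G (f p.1, p.2) := by
  intro a ha
  obtain ⟨K, hK, hKG⟩ := hG a ha
  exact ⟨K, hK, fun x => hKG (f x)⟩

variable [TopologicalSpace X]

theorem UniformlyLevelCompact.exists_eq_biInf (hcomp : UniformlyLevelCompact G)
    (hG : LowerSemicontinuous G) {F : Set Y} (hF : IsClosed F) {x : X}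
    (hx : ⨅ y ∈ F, G (x, y) < ⊤) : ∃ y ∈ F, G (x, y) = ⨅ y' ∈ F, G (x, y') := by
  obtain ⟨y₀, hy₀, hlt⟩ : ∃ y₀ ∈ F, G (x, y₀) < ⊤ := by
    simpa only [iInf_lt_iff, exists_prop] using hx
  obtain ⟨K, hK, hKG⟩ := hcomp _ hlt
  obtain ⟨y, hy, hmin⟩ := LowerSemicontinuousOn.exists_isMinOn
    (s := K ∩ F) ⟨y₀, hKG x y₀ le_rfl, hy₀⟩ (hK.inter_right hF)
    ((hG.comp (Continuous.prodMk_right x)).lowerSemicontinuousOn _)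
  refine ⟨y, hy.2, le_antisymm (le_iInf₂ fun z hz => ?_) (iInf₂_le y hy.2)⟩
  rcases le_total (G (x, z)) (G (x, y₀)) with hle | hle
  · exact hmin ⟨hKG x z hle, hz⟩
  · exact (hmin ⟨hKG x y₀ le_rfl, hy₀⟩).trans hle

theorem UniformlyLevelCompact.lowerSemicontinuous_biInf (hcomp : UniformlyLevelCompact G)
    (hG : LowerSemicontinuous G) {F : Set Y} (hF : IsClosed F) :
    LowerSemicontinuous fun x => ⨅ y ∈ F, G (x, y) := by
  rw [lowerSemicontinuous_iff_isClosed_preimage]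
  intro a
  obtain rfl | ha := eq_top_or_lt_top a
  · simp
  obtain ⟨K, hK, hKG⟩ := hcomp a ha
  have := isCompact_iff_compactSpace.1 hK
  have hclosed : IsClosed {p : X × K | G (p.1, p.2) ≤ a ∧ (p.2 : Y) ∈ F} :=
    ((hG.isClosed_preimage a).preimage
      (continuous_fst.prodMk (continuous_subtype_val.comp continuous_snd))).inter
      (hF.preimage (continuous_subtype_val.comp continuous_snd))
  convert isClosedMap_fst_of_compactSpace _ hclosed using 1
  ext x
  constructor
  · intro hx
    obtain ⟨y, hyF, hy⟩ := hcomp.exists_eq_biInf hG hF (hx.trans_lt ha)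
    exact ⟨(x, ⟨y, hKG x y (hy.trans_le hx)⟩), ⟨hy.trans_le hx, hyF⟩, rfl⟩
  · rintro ⟨⟨x, y⟩, ⟨hy, hyF⟩, rfl⟩
    exact (iInf₂_le (y : Y) hyF).trans hy

variable [MeasurableSpace X] [OpensMeasurableSpace X] [TopologicalSpace β] [OrderTopology β]
  [SecondCountableTopology β]

theorem UniformlyLevelCompact.isMeasurableCompactValued_argmin (hcomp : UniformlyLevelCompact G)
    (hG : LowerSemicontinuous G) (hfin : ∀ x, ⨅ y, G (x, y) < ⊤) :
    IsMeasurableCompactValued fun x => {y | G (x, y) ≤ ⨅ y', G (x, y')} where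
  isCompact x := by
    obtain ⟨K, hK, hKG⟩ := hcomp _ (hfin x)
    exact hK.of_isClosed_subset ((hG.comp (Continuous.prodMk_right x)).isClosed_preimage _) (hKG x)
  nonempty x := by
    obtain ⟨y, -, hy⟩ := hcomp.exists_eq_biInf hG isClosed_univ (x := x) (by simpa using hfin x)
    exact ⟨y, by simpa using hy.le⟩
  measurableSet_hit {F} hF := by
    borelize β
    have hit_eq : {x | ({y | G (x, y) ≤ ⨅ y', G (x, y')} ∩ F).Nonempty} =
        {x | ⨅ y ∈ F, G (x, y) ≤ ⨅ y ∈ Set.univ, G (x, y)} := by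
      ext x
      simp only [Set.mem_ofPred_eq, iInf_univ]
      constructor
      · rintro ⟨y, hy, hyF⟩
        exact (iInf₂_le y hyF).trans hy
      · intro h
        obtain ⟨y, hyF, hy⟩ := hcomp.exists_eq_biInf hG hF (h.trans_lt (hfin x))
        exact ⟨y, hy.trans_le h, hyF⟩
    rw [hit_eq]
    exact measurableSet_le (hcomp.lowerSemicontinuous_biInf hG hF).measurable
      (hcomp.lowerSemicontinuous_biInf hG isClosed_univ).measurable

theorem UniformlyLevelCompact.exists_measurable_argmin [TopologicalSpace.MetrizableSpace Y]
    [TopologicalSpace.SeparableSpace Y] [Nonempty Y] [MeasurableSpace Y] [BorelSpace Y]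
    (hcomp : UniformlyLevelCompact G) (hG : LowerSemicontinuous G) :
    ∃ T : X → Y, Measurable T ∧ ∀ x, G (x, T x) = ⨅ y, G (x, y) := by
  borelize β
  let D : Set X := {x | ⨅ y, G (x, y) < ⊤}
  have hD : MeasurableSet D := by
    have hmin := (hcomp.lowerSemicontinuous_biInf hG isClosed_univ).measurable
    simp only [iInf_univ] at hmin
    exact measurableSet_lt hmin measurable_const
  obtain ⟨S, hS, hSmin⟩ := ((hcomp.comp (Subtype.val : D → X)).isMeasurableCompactValued_argmin
    (hG.comp (by fun_prop : Continuous fun p : D × Y => ((p.1 : X), p.2)))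
    (fun x => x.2)).exists_measurable_selection
  obtain ⟨T, hT, hTS⟩ := (MeasurableEmbedding.subtype_coe hD).exists_measurable_extend hS
    fun _ => ‹Nonempty Y›
  refine ⟨T, hT, fun x => le_antisymm ?_ (iInf_le _ _)⟩
  by_cases hx : x ∈ D
  · rw [show T x = S ⟨x, hx⟩ from congrFun hTS ⟨x, hx⟩]
    exact hSmin ⟨x, hx⟩
  · exact le_top.trans (not_lt.1 hx)

end Argmin

theorem lowerSemicontinuous_lintegral {Y Z : Type*} [TopologicalSpace Y] [FirstCountableTopology Y]
    [MeasurableSpace Z] {f : Y → Z → ℝ≥0∞} (hf : ∀ z, LowerSemicontinuous fun y => f y z)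
    (hmeas : ∀ y, Measurable (f y)) (ρ : Measure Z) :
    LowerSemicontinuous fun y => ∫⁻ z, f y z ∂ρ :=
  lowerSemicontinuous_iff_le_liminf.2 fun y =>
    (lintegral_mono fun z => (hf z).le_liminf y).trans (lintegral_liminf_le hmeas)

theorem le_of_forall_le_add_mul {a b M : ℝ≥0∞} (hM : M ≠ ⊤)
    (h : ∀ t ≠ 0, t ≤ 1 → a ≤ b + t * M) : a ≤ b := by
  have hlim : Tendsto (fun n : ℕ => b + ((n + 1 : ℕ) : ℝ≥0∞)⁻¹ * M) atTop (𝓝 (b + 0 * M)) :=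
    (ENNReal.Tendsto.mul_const ((tendsto_add_atTop_iff_nat 1).2 ENNReal.tendsto_inv_nat_nhds_zero)
      (.inr hM)).const_add b
  rw [zero_mul, add_zero] at hlim
  exact ge_of_tendsto' hlim fun n =>
    h _ (ENNReal.inv_ne_zero.2 (ENNReal.natCast_ne_top _)) (by simp)

theorem isProbabilityMeasure_of_fst_eq {X Y : Type*} [MeasurableSpace X] [MeasurableSpace Y]
    {γ γ' : Measure (X × Y)} [IsProbabilityMeasure γ] (h : γ'.fst = γ.fst) :
    IsProbabilityMeasure γ' :=
  ⟨by rw [← Measure.fst_univ, h, measure_univ]⟩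

section Energy

variable {X Y : Type*} [MeasurableSpace Y]

/-- The cost `Φ(x, y, ρ)` for an agent of type `x` of playing `y` against the distribution `ρ` of
strategies. -/
noncomputable def individualCost (c : X × Y → ℝ≥0∞) (L : Y → ℝ≥0∞) (H : Y × Y → ℝ≥0∞)
    (x : X) (y : Y) (ρ : Measure Y) : ℝ≥0∞ :=
  c (x, y) + L y + 2 * ∫⁻ z, H (y, z) ∂ρ

variable {c : X × Y → ℝ≥0∞} {L : Y → ℝ≥0∞} {H : Y × Y → ℝ≥0∞}

theorem lowerSemicontinuous_individualCost [TopologicalSpace X] [TopologicalSpace Y]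
    [FirstCountableTopology Y] [OpensMeasurableSpace Y] (hc : LowerSemicontinuous c)
    (hL : LowerSemicontinuous L) (hH : LowerSemicontinuous H) (ρ : Measure Y) :
    LowerSemicontinuous fun p : X × Y => individualCost c L H p.1 p.2 ρ := by
  have hHρ : LowerSemicontinuous fun y => ∫⁻ z, H (y, z) ∂ρ :=
    lowerSemicontinuous_lintegral (fun z => hH.comp (Continuous.prodMk_left z))
      (fun y => (hH.comp (Continuous.prodMk_right y)).measurable) ρ
  have hHρ_snd : LowerSemicontinuous fun p : X × Y => ∫⁻ z, H (p.2, z) ∂ρ :=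
    hHρ.comp continuous_snd
  simp only [individualCost, two_mul]
  exact (hc.add (hL.comp continuous_snd)).add (hHρ_snd.add hHρ_snd)

theorem le_individualCost (x : X) (y : Y) (ρ : Measure Y) : L y ≤ individualCost c L H x y ρ :=
  le_add_self.trans le_self_add

theorem uniformlyLevelCompact_individualCost [TopologicalSpace Y]
    (hLcomp : ∀ κ : ℝ≥0, 0 < κ → IsCompact {y | L y ≤ κ}) (ρ : Measure Y) :
    UniformlyLevelCompact fun p : X × Y => individualCost c L H p.1 p.2 ρ := by
  refine fun a ha => ⟨_, hLcomp (a.toNNReal + 1) (by positivity), fun x y hy => ?_⟩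
  calc L y ≤ a := (le_individualCost x y ρ).trans hy
    _ ≤ (a.toNNReal + 1 : ℝ≥0) := by
      rw [ENNReal.coe_add, ENNReal.coe_toNNReal ha.ne]
      exact le_self_add

/-- The mutual interaction energy `∫ H dα⊗β` of two measures. -/
noncomputable def interaction (H : Y × Y → ℝ≥0∞) (α β : Measure Y) : ℝ≥0∞ :=
  ∫⁻ q, H q ∂(α.prod β)

section Interaction

variable {α α' β β' : Measure Y}

theorem interaction_comm (hHsymm : ∀ y y', H (y, y') = H (y', y)) [SFinite α] [SFinite β] :
    interaction H α β = interaction H β α := by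
  rw [interaction, ← lintegral_prod_swap]
  exact lintegral_congr fun q => hHsymm _ _

theorem interaction_mono [SFinite β'] (hα : α ≤ α') (hβ : β ≤ β') :
    interaction H α β ≤ interaction H α' β' :=
  lintegral_mono' (Measure.prod_mono hα hβ) le_rfl

theorem interaction_add_left [SFinite α] [SFinite α'] [SFinite β] :
    interaction H (α + α') β = interaction H α β + interaction H α' β := by
  simp only [interaction, Measure.add_prod, lintegral_add_measure]

theorem interaction_add_right [SFinite α] [SFinite β] [SFinite β'] :
    interaction H α (β + β') = interaction H α β + interaction H α β' := by
  simp only [interaction, Measure.prod_add, lintegral_add_measure]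

theorem interaction_smul_smul [SFinite β] (s t : ℝ≥0∞) :
    interaction H (s • α) (t • β) = s * t * interaction H α β := by
  simp only [interaction, Measure.prod_smul_left, Measure.prod_smul_right, lintegral_smul_measure,
    smul_eq_mul]
  ring

theorem interaction_comp_comp {Z Z' : Type*} [MeasurableSpace Z] [MeasurableSpace Z']
    (hH : Measurable H) (m : Measure Z) (m' : Measure Z') [SFinite m] [SFinite m']
    (κ : Kernel Z Y) (κ' : Kernel Z' Y) [IsSFiniteKernel κ] [IsSFiniteKernel κ'] :
    interaction H (κ ∘ₘ m) (κ' ∘ₘ m') = ∫⁻ z, ∫⁻ z', interaction H (κ z) (κ' z') ∂m' ∂m := by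
  have hinner : Measurable fun p : Y × Z' => ∫⁻ y', H (p.1, y') ∂κ' p.2 :=
    Measurable.lintegral_kernel_prod_right (κ := κ'.comap Prod.snd measurable_snd)
      (f := fun p y' => H (p.1, y')) (by fun_prop)
  rw [interaction, lintegral_prod _ hH.aemeasurable,
    Measure.lintegral_bind κ.measurable.aemeasurable hH.lintegral_prod_right'.aemeasurable]
  refine lintegral_congr fun z => ?_
  calc ∫⁻ y, ∫⁻ y', H (y, y') ∂(κ' ∘ₘ m') ∂κ z
      = ∫⁻ y, ∫⁻ z', ∫⁻ y', H (y, y') ∂κ' z' ∂m' ∂κ z :=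
        lintegral_congr fun y => Measure.lintegral_bind κ'.measurable.aemeasurable
          (hH.comp measurable_prodMk_left).aemeasurable
    _ = ∫⁻ z', ∫⁻ y, ∫⁻ y', H (y, y') ∂κ' z' ∂κ z ∂m' :=
        lintegral_lintegral_swap hinner.aemeasurable
    _ = ∫⁻ z', interaction H (κ z) (κ' z') ∂m' :=
        lintegral_congr fun z' => (lintegral_prod _ hH.aemeasurable).symm

theorem interaction_comp_self_ne_top {Z : Type*} [MeasurableSpace Z] (hH : Measurable H)
    {m : Measure Z} [IsFiniteMeasure m] {κ : Kernel Z Y} [IsSFiniteKernel κ] {C : ℝ≥0∞}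
    (hC : C ≠ ⊤) {g : Z → ℝ≥0∞} (hg : Measurable g) (hgm : ∫⁻ z, g z ∂m ≠ ⊤)
    (hκ : ∀ z z', interaction H (κ z) (κ z') ≤ C * (1 + g z + g z')) :
    interaction H (κ ∘ₘ m) (κ ∘ₘ m) ≠ ⊤ := by
  rw [interaction_comp_comp hH]
  refine ne_top_of_le_ne_top ?_ (lintegral_mono fun z => lintegral_mono fun z' => hκ z z')
  simp only [lintegral_const_mul' _ _ hC, lintegral_add_right _ hg, lintegral_const,
    lintegral_add_left measurable_const, lintegral_add_right _ measurable_const,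
    lintegral_mul_const _ hg]
  finiteness

end Interaction

variable [MeasurableSpace X]

/-- The potential functional `J` of the game with cost data `c`, `L`, `H`. -/
noncomputable def potential (c : X × Y → ℝ≥0∞) (L : Y → ℝ≥0∞) (H : Y × Y → ℝ≥0∞)
    (γ : Measure (X × Y)) : ℝ≥0∞ :=
  ∫⁻ p, c p ∂γ + ∫⁻ y, L y ∂γ.snd + interaction H γ.snd γ.snd

/-- A Cournot–Nash equilibrium: almost no agent can lower their cost by changing strategy alone, as
a single agent does not affect the distribution `γ.snd` of strategies. -/
def IsCournotNash (c : X × Y → ℝ≥0∞) (L : Y → ℝ≥0∞) (H : Y × Y → ℝ≥0∞)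
    (γ : Measure (X × Y)) : Prop :=
  ∀ᵐ p ∂γ, individualCost c L H p.1 p.2 γ.snd = ⨅ y, individualCost c L H p.1 y γ.snd

section FirstVariation

theorem measurable_individualCost (hc : Measurable c) (hL : Measurable L) (hH : Measurable H)
    (ρ : Measure Y) [SFinite ρ] :
    Measurable fun p : X × Y => individualCost c L H p.1 p.2 ρ :=
  (hc.add (hL.comp measurable_snd)).add
    ((hH.lintegral_prod_right'.comp measurable_snd).const_mul 2)

theorem lintegral_individualCost (hc : Measurable c) (hL : Measurable L) (hH : Measurable H)
    (η : Measure (X × Y)) (ρ : Measure Y) [SFinite ρ] :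
    ∫⁻ p, individualCost c L H p.1 p.2 ρ ∂η =
      ∫⁻ p, c p ∂η + ∫⁻ y, L y ∂η.snd + 2 * interaction H η.snd ρ := by
  have hHρ : Measurable fun y => ∫⁻ z, H (y, z) ∂ρ := hH.lintegral_prod_right'
  simp only [individualCost]
  rw [lintegral_add_left (f := fun p => c p + L p.2) (hc.add (hL.comp measurable_snd)),
    lintegral_add_left hc,
    lintegral_const_mul 2 (f := fun p : X × Y => ∫⁻ z, H (p.2, z) ∂ρ) (hHρ.comp measurable_snd),
    interaction, lintegral_prod _ hH.aemeasurable,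
    Measure.snd, lintegral_map hL measurable_snd, lintegral_map hHρ measurable_snd]

theorem lintegral_individualCost_ne_top (hc : Measurable c) (hL : Measurable L)
    (hH : Measurable H) {γ : Measure (X × Y)} [SFinite γ] (hγ : potential c L H γ ≠ ⊤) :
    ∫⁻ p, individualCost c L H p.1 p.2 γ.snd ∂γ ≠ ⊤ := by
  rw [lintegral_individualCost hc hL hH]
  rw [potential, ENNReal.add_ne_top] at hγ
  exact ENNReal.add_ne_top.2 ⟨hγ.1, ENNReal.mul_ne_top ENNReal.ofNat_ne_top hγ.2⟩

theorem potential_add (hc : Measurable c) (hL : Measurable L) (hH : Measurable H)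
    (hHsymm : ∀ y y', H (y, y') = H (y', y)) (σ η : Measure (X × Y)) [SFinite σ] [SFinite η] :
    potential c L H (σ + η) = potential c L H σ +
      ∫⁻ p, individualCost c L H p.1 p.2 σ.snd ∂η + interaction H η.snd η.snd := by
  rw [lintegral_individualCost hc hL hH, potential, potential, Measure.snd_add,
    interaction_add_left, interaction_add_right, interaction_add_right,
    interaction_comm hHsymm (α := σ.snd) (β := η.snd), lintegral_add_measure,
    lintegral_add_measure]
  ring

/-- Expanding around `σ` produces costs against `σ.snd`. Passing to costs against `(σ + η).snd` adds
only interactions among `η` and `η'`, which are of second order when both are scaled by `t`. -/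
theorem lintegral_individualCost_le_of_potential_le (hc : Measurable c) (hL : Measurable L)
    (hH : Measurable H) (hHsymm : ∀ y y', H (y, y') = H (y', y)) {σ η η' : Measure (X × Y)}
    [SFinite σ] [SFinite η] [SFinite η'] (hσ : potential c L H σ ≠ ⊤)
    (hle : potential c L H (σ + η) ≤ potential c L H (σ + η')) :
    ∫⁻ p, individualCost c L H p.1 p.2 (σ + η).snd ∂η ≤
      ∫⁻ p, individualCost c L H p.1 p.2 (σ + η).snd ∂η' +
        (interaction H η.snd η.snd + interaction H η'.snd η'.snd) := by
  have cost_add (θ : Measure (X × Y)) [SFinite θ] :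
      ∫⁻ p, individualCost c L H p.1 p.2 (σ + η).snd ∂θ =
        ∫⁻ p, individualCost c L H p.1 p.2 σ.snd ∂θ + 2 * interaction H θ.snd η.snd := by
    rw [lintegral_individualCost hc hL hH, lintegral_individualCost hc hL hH, Measure.snd_add,
      interaction_add_right]
    ring
  rw [potential_add hc hL hH hHsymm, potential_add hc hL hH hHsymm, add_assoc, add_assoc,
    ENNReal.add_le_add_iff_left hσ] at hle
  rw [cost_add, cost_add]
  calc ∫⁻ p, individualCost c L H p.1 p.2 σ.snd ∂η + 2 * interaction H η.snd η.snd
      = (∫⁻ p, individualCost c L H p.1 p.2 σ.snd ∂η + interaction H η.snd η.snd) +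
          interaction H η.snd η.snd := by ring
    _ ≤ (∫⁻ p, individualCost c L H p.1 p.2 σ.snd ∂η' + interaction H η'.snd η'.snd) +
          interaction H η.snd η.snd := by gcongr
    _ ≤ (∫⁻ p, individualCost c L H p.1 p.2 σ.snd ∂η' + interaction H η'.snd η'.snd) +
          interaction H η.snd η.snd + 2 * interaction H η'.snd η.snd := le_self_add
    _ = _ := by ring

theorem lintegral_individualCost_le_of_isMinOn (hc : Measurable c) (hL : Measurable L)
    (hH : Measurable H) (hHsymm : ∀ y y', H (y, y') = H (y', y)) {γ η η' : Measure (X × Y)}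
    [IsFiniteMeasure γ] [IsFiniteMeasure η'] (hγ : potential c L H γ ≠ ⊤)
    (hmin : IsMinOn (potential c L H) {γ' | γ'.fst = γ.fst} γ) (hηγ : η ≤ γ)
    (hfst : η'.fst = η.fst) (hη' : interaction H η'.snd η'.snd ≠ ⊤) :
    ∫⁻ p, individualCost c L H p.1 p.2 γ.snd ∂η ≤
      ∫⁻ p, individualCost c L H p.1 p.2 γ.snd ∂η' := by
  have : IsFiniteMeasure η := isFiniteMeasure_of_le γ hηγ
  have hη : interaction H η.snd η.snd ≠ ⊤ :=
    ne_top_of_le_ne_top hγ ((interaction_mono (Measure.snd_mono hηγ) (Measure.snd_mono hηγ)).trans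
      le_add_self)
  refine le_of_forall_le_add_mul (ENNReal.add_ne_top.2 ⟨hη, hη'⟩) fun t ht0 ht1 => ?_
  have ht : t ≠ ⊤ := ne_top_of_le_ne_top ENNReal.one_ne_top ht1
  have : IsFiniteMeasure (t • η) := η.smul_finite ht
  have : IsFiniteMeasure (t • η') := η'.smul_finite ht
  set σ := γ - t • η
  have hσ : σ + t • η = γ := Measure.sub_add_cancel_of_le <| Measure.le_intro fun s _ _ =>
    (mul_le_of_le_one_left' ht1).trans (hηγ s)
  have hle : potential c L H (σ + t • η) ≤ potential c L H (σ + t • η') := by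
    refine hσ.symm ▸ hmin ?_
    rw [Set.mem_ofPred_eq, ← hσ, Measure.fst_add, Measure.fst_add]
    simp only [Measure.fst, Measure.map_smul] at hfst ⊢
    rw [hfst]
  have hσfin : potential c L H σ ≠ ⊤ := ne_top_of_le_ne_top hγ (by
    rw [← hσ, potential_add hc hL hH hHsymm, add_assoc]
    exact le_self_add)
  have key := lintegral_individualCost_le_of_potential_le hc hL hH hHsymm hσfin hle
  simp only [hσ, Measure.snd, Measure.map_smul, lintegral_smul_measure, interaction_smul_smul,
    smul_eq_mul] at key
  exact (ENNReal.mul_le_mul_iff_right ht0 ht).1 (key.trans_eq (by simp only [Measure.snd]; ring))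

theorem ae_individualCost_le_lintegral_kernel (hc : Measurable c) (hL : Measurable L)
    (hH : Measurable H) (hHsymm : ∀ y y', H (y, y') = H (y', y)) {γ : Measure (X × Y)}
    [IsFiniteMeasure γ] (hγ : potential c L H γ ≠ ⊤)
    (hmin : IsMinOn (potential c L H) {γ' | γ'.fst = γ.fst} γ) (κ : Kernel X Y)
    [IsMarkovKernel κ] (hκ : interaction H (κ ∘ₘ γ.fst) (κ ∘ₘ γ.fst) ≠ ⊤) :
    ∀ᵐ p ∂γ, individualCost c L H p.1 p.2 γ.snd ≤
      ∫⁻ y, individualCost c L H p.1 y γ.snd ∂κ p.1 := by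
  have hΦ := measurable_individualCost hc hL hH γ.snd
  refine ae_le_of_forall_setLIntegral_le_of_sigmaFinite hΦ fun s _ _ => ?_
  set η := γ.restrict s
  have hηγ : η ≤ γ := Measure.restrict_le_self
  have hη' : interaction H (η.fst ⊗ₘ κ).snd (η.fst ⊗ₘ κ).snd ≠ ⊤ := by
    rw [Measure.snd_compProd]
    have hle : κ ∘ₘ η.fst ≤ κ ∘ₘ γ.fst := Measure.le_intro fun t ht _ => by
      simp only [Measure.bind_apply ht κ.aemeasurable]
      exact lintegral_mono' (Measure.fst_mono hηγ) le_rfl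
    exact ne_top_of_le_ne_top hκ (interaction_mono hle hle)
  calc ∫⁻ p, individualCost c L H p.1 p.2 γ.snd ∂η
      ≤ ∫⁻ p, individualCost c L H p.1 p.2 γ.snd ∂(η.fst ⊗ₘ κ) :=
        lintegral_individualCost_le_of_isMinOn hc hL hH hHsymm hγ hmin hηγ
          (Measure.fst_compProd _ _) hη'
    _ = ∫⁻ p, ∫⁻ y, individualCost c L H p.1 y γ.snd ∂κ p.1 ∂η := by
        rw [Measure.lintegral_compProd hΦ, Measure.fst,
          lintegral_map hΦ.lintegral_kernel_prod_right' measurable_fst]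

end FirstVariation

theorem minimizers_are_cournotNash_general [TopologicalSpace X] [OpensMeasurableSpace X]
    [TopologicalSpace Y] [TopologicalSpace.MetrizableSpace Y] [SecondCountableTopology Y]
    [BorelSpace Y] (hc : LowerSemicontinuous c) (hL : LowerSemicontinuous L)
    (hLcomp : ∀ κ : ℝ≥0, 0 < κ → IsCompact {y | L y ≤ κ}) (hH : LowerSemicontinuous H)
    (hHsymm : ∀ y y', H (y, y') = H (y', y)) {γ : Measure (X × Y)} [IsFiniteMeasure γ]
    (hγ : potential c L H γ ≠ ⊤) (hmin : IsMinOn (potential c L H) {γ' | γ'.fst = γ.fst} γ)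
    (ν : ℕ → Kernel Y Y) (hν : ∀ n, IsMarkovKernel (ν n)) {C : ℕ → ℝ≥0∞} (hC : ∀ n, C n ≠ ⊤)
    (hνH : ∀ n y y', interaction H (ν n y) (ν n y') ≤ C n * (1 + L y + L y'))
    (hνΦ : ∀ x y, individualCost c L H x y γ.snd < ⊤ →
      Tendsto (fun n => ∫⁻ z, individualCost c L H x z γ.snd ∂ν n y) atTop
        (𝓝 (individualCost c L H x y γ.snd))) :
    IsCournotNash c L H γ := by
  rcases isEmpty_or_nonempty Y with _ | _
  · simp [IsCournotNash, Measure.eq_zero_of_isEmpty γ]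
  have hcm := hc.measurable
  have hLm := hL.measurable
  have hHm := hH.measurable
  have hΦ_fin := lintegral_individualCost_ne_top hcm hLm hHm hγ
  obtain ⟨T, hT, hTmin⟩ := (uniformlyLevelCompact_individualCost hLcomp
    γ.snd).exists_measurable_argmin (lowerSemicontinuous_individualCost hc hL hH γ.snd)
  have hTle (p : X × Y) : individualCost c L H p.1 (T p.1) γ.snd ≤
      individualCost c L H p.1 p.2 γ.snd := (hTmin p.1).trans_le (iInf_le _ p.2)
  have hLT : ∫⁻ x, L (T x) ∂γ.fst ≠ ⊤ := by
    rw [Measure.fst, lintegral_map (f := fun x => L (T x)) (hLm.comp hT) measurable_fst]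
    exact ne_top_of_le_ne_top hΦ_fin
      (lintegral_mono fun p => (le_individualCost p.1 _ _).trans (hTle p))
  have no_gain (n : ℕ) := ae_individualCost_le_lintegral_kernel hcm hLm hHm hHsymm hγ hmin
    ((ν n).comap T hT) (interaction_comp_self_ne_top hHm (hC n) (hLm.comp hT) hLT
      fun x x' => hνH n (T x) (T x'))
  filter_upwards [ae_all_iff.2 no_gain,
    ae_lt_top (measurable_individualCost hcm hLm hHm γ.snd) hΦ_fin] with p hp hp_fin
  refine (le_antisymm ?_ (hTle p)).trans (hTmin p.1)
  exact ge_of_tendsto' (hνΦ p.1 (T p.1) ((hTle p).trans_lt hp_fin)) hp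

end Energy

/-- Under the technical approximation hypothesis on measurable families
`(ν_n^y)_{y∈Y}`, every minimizer of the potential functional `J` over `P_μ(X×Y)` is a
Cournot–Nash equilibrium for the cost `Φ(x,y,ν) = c(x,y) + L(y) + 2∫ H(y,·) dν`. -/
theorem minimizers_are_cournotNash
    {X Y : Type*}
    [TopologicalSpace X] [PolishSpace X] [MeasurableSpace X] [BorelSpace X]
    [TopologicalSpace Y] [PolishSpace Y] [MeasurableSpace Y] [BorelSpace Y]
    (μ : Measure X) [IsProbabilityMeasure μ]
    (c : X × Y → ENNReal) (hc : LowerSemicontinuous c)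
    (L : Y → ENNReal) (hL : LowerSemicontinuous L)
    (hLcomp : ∀ κ : NNReal, 0 < κ → IsCompact {y : Y | L y ≤ (κ : ENNReal)})
    (H : Y × Y → ENNReal) (hH : LowerSemicontinuous H)
    (hHsymm : ∀ y y' : Y, H (y, y') = H (y', y))
    -- the potential functional J
    (J : Measure (X × Y) → ENNReal)
    (hJ : ∀ γ : Measure (X × Y), J γ =
      ∫⁻ p, c p ∂γ + ∫⁻ y, L y ∂(γ.map Prod.snd) +
        ∫⁻ q, H q ∂((γ.map Prod.snd).prod (γ.map Prod.snd)))
    -- the individual cost Φ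
    (Φ : X → Y → Measure Y → ENNReal)
    (hΦ : ∀ x y ν, Φ x y ν = c (x, y) + L y + 2 * ∫⁻ z, H (y, z) ∂ν)
    -- finiteness of the infimum
    (hfin : (⨅ γ ∈ {γ : Measure (X × Y) | IsProbabilityMeasure γ ∧ γ.map Prod.fst = μ}, J γ) < ⊤)
    -- the technical hypothesis: approximating measurable families
    (ν : ℕ → Y → Measure Y) (C : ℕ → ENNReal)
    (hC : ∀ n, 0 < C n ∧ C n < ⊤)
    (hνprob : ∀ n y, IsProbabilityMeasure (ν n y))
    (hνmeas : ∀ n, ∀ B : Set Y, MeasurableSet B → Measurable fun y => ν n y B)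
    (hνH : ∀ n, ∀ y y' : Y,
      ∫⁻ q, H q ∂((ν n y).prod (ν n y')) ≤ C n * (1 + L y + L y'))
    (hνΦ : ∀ (x : X) (y : Y) (ρ : Measure Y), IsProbabilityMeasure ρ → Φ x y ρ < ⊤ →
      Tendsto (fun n => ∫⁻ z, Φ x z ρ ∂(ν n y)) atTop (𝓝 (Φ x y ρ))) :
    -- conclusion: every minimizer of J over P_μ(X×Y) is a Cournot–Nash equilibrium
    ∀ γ : Measure (X × Y), IsProbabilityMeasure γ → γ.map Prod.fst = μ →
      (J γ = ⨅ γ' ∈ {γ' : Measure (X × Y) | IsProbabilityMeasure γ' ∧ γ'.map Prod.fst = μ}, J γ') →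
      (∀ᵐ p ∂γ, Φ p.1 p.2 (γ.map Prod.snd) = ⨅ y' : Y, Φ p.1 y' (γ.map Prod.snd)) := by
  obtain ⟨rfl, rfl⟩ : J = potential c L H ∧ Φ = individualCost c L H := ⟨funext hJ, funext₃ hΦ⟩
  intro γ hγ hγμ hmin
  refine minimizers_are_cournotNash_general hc hL hLcomp hH hHsymm (hmin ▸ hfin.ne)
    (isMinOn_iff.2 fun γ' hγ' => hmin.trans_le (iInf₂_le γ' ⟨?_, hγ'.trans hγμ⟩))
    (fun n => ⟨ν n, Measure.measurable_of_measurable_coe _ (hνmeas n)⟩) (fun n => ⟨hνprob n⟩)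
    (fun n => (hC n).2.ne) hνH fun x y => hνΦ x y γ.snd inferInstance
  exact isProbabilityMeasure_of_fst_eq hγ'
end
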